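/- Let φ : ℝⁿ → ℝᵐ be a C^∞ map, let a ∈ ℝⁿ, and let V ⊆ ℝⁿ be an open set containing a. Then for every ε > 0 and all integers 0 ≤ k ≤ l there exists δ > 0 with the following property: for every C^∞ map ψ : ℝⁿ → ℝᵐ satisfying ‖D^i ψ(a) − D^i φ(a)‖ < δ for all 0 ≤ i ≤ k, there exists a C^∞ map φ̃ : ℝⁿ → ℝᵐ such that (i) D^i φ̃(a) = D^i ψ(a) for all 0 ≤ i ≤ k, (ii) φ̃(x) = φ(x) for all x ∈ ℝⁿ \ V, and (iii) sup_{x ∈ ℝⁿ} ‖D^i (φ̃ − φ)(x)‖ < ε for all 0 ≤ i ≤ l. -/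

import Mathlib

open Topology

namespace PerturbJet

variable {E F : Type*} [NormedAddCommGroup E] [NormedSpace ℝ E]
  [NormedAddCommGroup F] [NormedSpace ℝ F]

theorem smooth_nat {f : E → F} (hf : ContDiff ℝ (⊤ : ℕ∞) f) (i : ℕ) : ContDiff ℝ i f :=
  hf.of_le (mod_cast le_top)

/-- Compactly supported smooth maps vanishing off `V`. -/
def testSpace (E F : Type*) [NormedAddCommGroup E] [NormedSpace ℝ E]
    [NormedAddCommGroup F] [NormedSpace ℝ F] (V : Set E) : Submodule ℝ (E → F) where
  carrier := {f | ContDiff ℝ (⊤ : ℕ∞) f ∧ HasCompactSupport f ∧ ∀ x ∉ V, f x = 0}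
  add_mem' := by
    rintro f g ⟨hf, hf', hf''⟩ ⟨hg, hg', hg''⟩
    exact ⟨hf.add hg, hf'.add hg', fun x hx => by simp [hf'' x hx, hg'' x hx]⟩
  zero_mem' := ⟨contDiff_const, HasCompactSupport.zero, fun _ _ => rfl⟩
  smul_mem' := by
    rintro c f ⟨hf, hf', hf''⟩
    refine ⟨hf.const_smul c, ?_, fun x hx => by simp [hf'' x hx]⟩
    exact hf'.smul_left (f := fun _ => c)

/-- The `k`-jet at `a`. -/
noncomputable def jet (V : Set E) (a : E) (k : ℕ) :
    testSpace E F V →ₗ[ℝ] (∀ i : Fin (k + 1), E [×(i : ℕ)]→L[ℝ] F) where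
  toFun f := fun i => iteratedFDeriv ℝ i f.1 a
  map_add' f g := by
    funext i
    exact iteratedFDeriv_add_apply (smooth_nat f.2.1 i).contDiffAt (smooth_nat g.2.1 i).contDiffAt
  map_smul' c f := by
    funext i
    exact iteratedFDeriv_const_smul_apply (smooth_nat f.2.1 i).contDiffAt

/-- The `i`-th derivative as a bounded continuous function. -/
noncomputable def deriv (V : Set E) (i : ℕ) :
    testSpace E F V →ₗ[ℝ] BoundedContinuousFunction E (E [×i]→L[ℝ] F) where
  toFun f := BoundedContinuousFunction.ofNormedAddCommGroup (iteratedFDeriv ℝ i f.1)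
    ((smooth_nat f.2.1 i).continuous_iteratedFDeriv le_rfl)
    ((f.2.2.1.iteratedFDeriv (𝕜 := ℝ) i).exists_bound_of_continuous
      ((smooth_nat f.2.1 i).continuous_iteratedFDeriv le_rfl)).choose
    ((f.2.2.1.iteratedFDeriv (𝕜 := ℝ) i).exists_bound_of_continuous
      ((smooth_nat f.2.1 i).continuous_iteratedFDeriv le_rfl)).choose_spec
  map_add' f g := by
    ext1 x
    exact iteratedFDeriv_add_apply (smooth_nat f.2.1 i).contDiffAt (smooth_nat g.2.1 i).contDiffAt
  map_smul' c f := by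
    ext1 x
    exact iteratedFDeriv_const_smul_apply (smooth_nat f.2.1 i).contDiffAt

instance finite_cmm [FiniteDimensional ℝ E] [FiniteDimensional ℝ F] (i : ℕ) :
    FiniteDimensional ℝ (E [×i]→L[ℝ] F) :=
  Module.Finite.of_injective
    ({ toFun := fun f => f.toMultilinearMap
       map_add' := fun _ _ => rfl
       map_smul' := fun _ _ => rfl } :
      (E [×i]→L[ℝ] F) →ₗ[ℝ] MultilinearMap ℝ (fun _ : Fin i => E) F)
    ContinuousMultilinearMap.toMultilinearMap_injective

theorem cont_aux {J X G : Type*} [NormedAddCommGroup J] [NormedSpace ℝ J] [FiniteDimensional ℝ J]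
    [TopologicalSpace X] [NormedAddCommGroup G] [NormedSpace ℝ G] (W : Submodule ℝ J)
    (L : W →ₗ[ℝ] BoundedContinuousFunction X G) (ε : ℝ) (hε : 0 < ε) :
    ∀ᶠ w in 𝓝 (0 : W), ∀ x, ‖L w x‖ < ε := by
  have h1 := (LinearMap.continuous_of_finiteDimensional (E := W)
    (F' := BoundedContinuousFunction X G) L).norm.tendsto 0
  simp only [map_zero, norm_zero] at h1
  filter_upwards [h1.eventually (gt_mem_nhds hε)] with w hw x
  exact ((L w).norm_coe_le_norm x).trans_lt hw

end PerturbJet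

open PerturbJet


/-- **Jet perturbation lemma** (Lemma 2.4 of Kim–Zaitsev, "Remarks on the rigidity of
CR-manifolds"). Let `φ : ℝⁿ → ℝᵐ` be a `C^∞` map, `a ∈ ℝⁿ`, and `V` an open set
containing `a`. For every `ε > 0` and integers `0 ≤ k ≤ l` there is `δ > 0` such that
any `k`-jet at `a` within distance `δ` of the `k`-jet of `φ` (represented here by a
smooth map `ψ` whose derivatives at `a` up to order `k` are `δ`-close to those of `φ`)
is realized by a smooth map `φ̃` agreeing with `φ` outside `V` and `ε`-close to `φ`
in the `C^l` norm. -/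
theorem perturb_jet
    (n m : ℕ) (φ : EuclideanSpace ℝ (Fin n) → EuclideanSpace ℝ (Fin m))
    (hφ : ContDiff ℝ (⊤ : ℕ∞) φ)
    (a : EuclideanSpace ℝ (Fin n)) (V : Set (EuclideanSpace ℝ (Fin n)))
    (hV : IsOpen V) (haV : a ∈ V)
    (ε : ℝ) (hε : 0 < ε) (k l : ℕ) (hkl : k ≤ l) :
    ∃ δ > (0 : ℝ),
      ∀ ψ : EuclideanSpace ℝ (Fin n) → EuclideanSpace ℝ (Fin m),
        ContDiff ℝ (⊤ : ℕ∞) ψ →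
        (∀ i ≤ k, ‖iteratedFDeriv ℝ i ψ a - iteratedFDeriv ℝ i φ a‖ < δ) →
        ∃ φt : EuclideanSpace ℝ (Fin n) → EuclideanSpace ℝ (Fin m),
          ContDiff ℝ (⊤ : ℕ∞) φt ∧
          (∀ i ≤ k, iteratedFDeriv ℝ i φt a = iteratedFDeriv ℝ i ψ a) ∧
          (∀ x ∉ V, φt x = φ x) ∧
          (∀ i ≤ l, ∀ x, ‖iteratedFDeriv ℝ i (fun y => φt y - φ y) x‖ < ε) := by
  let T := jet (F := EuclideanSpace ℝ (Fin m)) V a k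
  have : Module.Free ℝ T.range := Module.Free.of_divisionRing ℝ _
  have : Module.Projective ℝ T.range := Module.Projective.of_free
  have : FiniteDimensional ℝ (∀ i : Fin (k + 1), (EuclideanSpace ℝ (Fin n))
      [×(i : ℕ)]→L[ℝ] (EuclideanSpace ℝ (Fin m))) := Module.Finite.pi
  have : FiniteDimensional ℝ T.range := FiniteDimensional.finiteDimensional_submodule _
  obtain ⟨s, hs⟩ := T.rangeRestrict.exists_rightInverse_of_surjective T.range_rangeRestrict
  let D : ∀ i : ℕ, T.range →ₗ[ℝ] BoundedContinuousFunction (EuclideanSpace ℝ (Fin n))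
      ((EuclideanSpace ℝ (Fin n)) [×i]→L[ℝ] (EuclideanSpace ℝ (Fin m))) := fun i =>
    (PerturbJet.deriv V i) ∘ₗ s
  have hev : ∀ᶠ w in 𝓝 (0 : T.range), ∀ i ∈ Set.Iic l, ∀ x, ‖D i w x‖ < ε := by
    rw [Filter.eventually_all_finite (Set.finite_Iic l)]
    intro i _
    exact cont_aux T.range (D i) ε hε
  obtain ⟨δ, hδ, hball⟩ := Metric.eventually_nhds_iff.1 hev
  refine ⟨δ, hδ, fun ψ hψ hclose => ?_⟩
  obtain ⟨r, hr, hrV⟩ := Metric.nhds_basis_closedBall.mem_iff.1 (hV.mem_nhds haV)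
  let χ : ContDiffBump a := ⟨r / 2, r, by positivity, by linarith⟩
  have hgsm : ContDiff ℝ (⊤ : ℕ∞) (fun x => χ x • (ψ x - φ x)) := χ.contDiff.smul (hψ.sub hφ)
  let g : testSpace _ (EuclideanSpace ℝ (Fin m)) V := ⟨fun x => χ x • (ψ x - φ x), hgsm,
    χ.hasCompactSupport.smul_right, fun x hx => by
      have : χ x = 0 := χ.zero_of_le_dist (by
        by_contra h
        exact hx (hrV (Metric.mem_closedBall.2 (not_le.1 h).le)))
      simp [this]⟩
  have hgjet : ∀ i : ℕ, iteratedFDeriv ℝ i g.1 a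
      = iteratedFDeriv ℝ i ψ a - iteratedFDeriv ℝ i φ a := by
    intro i
    have h1 : g.1 =ᶠ[𝓝 a] (ψ - φ) := by
      filter_upwards [χ.eventuallyEq_one] with x hx
      simp [g, hx]
    rw [(h1.iteratedFDeriv (𝕜 := ℝ) i).eq_of_nhds]
    exact iteratedFDeriv_sub_apply (smooth_nat hψ i).contDiffAt (smooth_nat hφ i).contDiffAt
  let w : T.range := T.rangeRestrict g
  have hw : dist w 0 < δ := by
    rw [dist_zero_right]
    change ‖T g‖ < δ
    rw [pi_norm_lt_iff hδ]
    intro i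
    change ‖iteratedFDeriv ℝ (i : ℕ) g.1 a‖ < δ
    rw [hgjet]
    exact hclose i (Nat.lt_succ_iff.1 i.2)
  have hsw : T (s w) = T g := congrArg Subtype.val (LinearMap.congr_fun hs w)
  have hsm : ContDiff ℝ (⊤ : ℕ∞) (s w).1 := (s w).2.1
  refine ⟨φ + (s w).1, hφ.add hsm, ?_, ?_, ?_⟩
  · intro i hi
    rw [iteratedFDeriv_add_apply (smooth_nat hφ i).contDiffAt (smooth_nat hsm i).contDiffAt]
    have h2 : iteratedFDeriv ℝ i (s w).1 a = iteratedFDeriv ℝ i g.1 a :=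
      congrFun hsw ⟨i, Nat.lt_succ_iff.2 hi⟩
    rw [h2, hgjet]
    abel
  · intro x hx
    simp [(s w).2.2.2 x hx]
  · intro i hi x
    have h3 : (fun y => (φ + (s w).1) y - φ y) = (s w).1 := by
      funext y
      simp
    rw [h3]
    exact hball hw i hi x
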